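/- Let V be a real normed vector space, |·| a continuous seminorm on V, and F₀, F₁ : V → ℝ convex and Gâteaux differentiable with Gâteaux derivatives F₀', F₁'. Let ε ∈ (0, 1), let p ≥ q with q > 1, set F = F₀ + ε·F₁, and let u ∈ V minimize F over V. Suppose there are constants μ₀, μ₁ > 0 and a set W ⊆ V such that for all w ∈ W: d_{F₀}(w; u) ≥ (μ₀/p)·|w|^p and d_{F₁}(w; u) ≥ (μ₁/p)·‖w‖^p. Then for every w ∈ W: F(u + w) − F(u) ≥ (min{μ₀, μ₁}/(p·2^{p/q − 1}))·(|w|^q + ε‖w‖^q)^{p/q}. -/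

import Mathlib

/-- `f` is the Gâteaux derivative of `F` at `v`. -/
def HasGateauxDerivAt {V : Type*} [NormedAddCommGroup V] [NormedSpace ℝ V]
    (F : V → ℝ) (f : V →L[ℝ] ℝ) (v : V) : Prop :=
  ∀ w : V, Filter.Tendsto (fun t : ℝ => (F (v + t • w) - F v) / t)
    (nhdsWithin (0 : ℝ) {(0 : ℝ)}ᶜ) (nhds (f w))

/-!
At a minimizer the derivative of `F₀ + ε • F₁` vanishes, so the energy excess equals the Bregman
distance `d_{F₀} + ε d_{F₁}`, which is at least `(min μ₀ μ₁ / p) * (a ^ p + ε * b ^ p)` with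
`a = |w|` and `b = ‖w‖`. With `r = p / q ≥ 1`, the power-mean inequality
`(x + y) ^ r ≤ 2 ^ (r - 1) * (x ^ r + y ^ r)` at `x = a ^ q`, `y = ε * b ^ q` gives the claim,
because `ε ^ r ≤ ε`: this is what keeps the constant independent of `ε`.
-/

section RealPower

variable {a b x y p q r ε : ℝ}

theorem add_rpow_le_two_rpow_mul_rpow_add_rpow (hx : 0 ≤ x) (hy : 0 ≤ y) (hr : 1 ≤ r) :
    (x + y) ^ r ≤ 2 ^ (r - 1) * (x ^ r + y ^ r) := by
  lift x to NNReal using hx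
  lift y to NNReal using hy
  exact_mod_cast NNReal.rpow_add_le_mul_rpow_add_rpow x y hr

theorem add_mul_rpow_le_two_rpow_mul (hx : 0 ≤ x) (hy : 0 ≤ y) (hε₀ : 0 ≤ ε) (hε₁ : ε ≤ 1)
    (hr : 1 ≤ r) :
    (x + ε * y) ^ r ≤ 2 ^ (r - 1) * (x ^ r + ε * y ^ r) :=
  calc (x + ε * y) ^ r
      ≤ 2 ^ (r - 1) * (x ^ r + (ε * y) ^ r) :=
        add_rpow_le_two_rpow_mul_rpow_add_rpow hx (mul_nonneg hε₀ hy) hr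
    _ = 2 ^ (r - 1) * (x ^ r + ε ^ r * y ^ r) := by rw [Real.mul_rpow hε₀ hy]
    _ ≤ 2 ^ (r - 1) * (x ^ r + ε * y ^ r) := by
        gcongr
        exact Real.rpow_le_self_of_le_one hε₀ hε₁ hr

theorem rpow_add_mul_rpow_rpow_div_le (ha : 0 ≤ a) (hb : 0 ≤ b) (hε₀ : 0 ≤ ε) (hε₁ : ε ≤ 1)
    (hq : 0 < q) (hpq : q ≤ p) :
    (a ^ q + ε * b ^ q) ^ (p / q) ≤ 2 ^ (p / q - 1) * (a ^ p + ε * b ^ p) := by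
  have rpow_rpow_div : ∀ {c : ℝ}, 0 ≤ c → (c ^ q) ^ (p / q) = c ^ p := fun hc => by
    rw [← Real.rpow_mul hc, mul_div_cancel₀ p hq.ne']
  simpa only [rpow_rpow_div ha, rpow_rpow_div hb] using
    add_mul_rpow_le_two_rpow_mul (Real.rpow_nonneg ha q) (Real.rpow_nonneg hb q) hε₀ hε₁
      ((one_le_div hq).2 hpq)

theorem min_div_mul_rpow_add_mul_rpow_rpow_div_le {μ₀ μ₁ d₀ d₁ : ℝ}
    (ha : 0 ≤ a) (hb : 0 ≤ b) (hε₀ : 0 ≤ ε) (hε₁ : ε ≤ 1) (hq : 0 < q) (hpq : q ≤ p)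
    (hμ₀ : 0 ≤ μ₀) (hμ₁ : 0 ≤ μ₁) (h₀ : μ₀ / p * a ^ p ≤ d₀) (h₁ : μ₁ / p * b ^ p ≤ d₁) :
    min μ₀ μ₁ / (p * 2 ^ (p / q - 1)) * (a ^ q + ε * b ^ q) ^ (p / q) ≤ d₀ + ε * d₁ := by
  have hp : 0 < p := hq.trans_le hpq
  calc min μ₀ μ₁ / (p * 2 ^ (p / q - 1)) * (a ^ q + ε * b ^ q) ^ (p / q)
      ≤ min μ₀ μ₁ / (p * 2 ^ (p / q - 1)) * (2 ^ (p / q - 1) * (a ^ p + ε * b ^ p)) := by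
        gcongr
        exact rpow_add_mul_rpow_rpow_div_le ha hb hε₀ hε₁ hq hpq
    _ = min μ₀ μ₁ / p * a ^ p + ε * (min μ₀ μ₁ / p * b ^ p) := by field_simp
    _ ≤ μ₀ / p * a ^ p + ε * (μ₁ / p * b ^ p) := by
        gcongr
        exacts [min_le_left _ _, min_le_right _ _]
    _ ≤ d₀ + ε * d₁ := by gcongr

end RealPower

section BregmanDist

variable {E : Type*} [AddCommGroup E] [Module ℝ E] {F G : E → ℝ} {u w : E}

/-- The Bregman distance `d_F(w; u)`, where `w` is the displacement from the base point `u`.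
It uses only the derivative of `F` at `u` in the direction `w`, and is meaningful when
`LineDifferentiableAt ℝ F u w` (otherwise `lineDeriv` is `0`). -/
noncomputable def bregmanDist (F : E → ℝ) (w u : E) : ℝ :=
  F (u + w) - F u - lineDeriv ℝ F u w

theorem bregmanDist_add (hF : LineDifferentiableAt ℝ F u w) (hG : LineDifferentiableAt ℝ G u w) :
    bregmanDist (F + G) w u = bregmanDist F w u + bregmanDist G w u := by
  have lineDeriv_add : lineDeriv ℝ (F + G) u w = lineDeriv ℝ F u w + lineDeriv ℝ G u w :=
    deriv_add hF hG
  simp only [bregmanDist, lineDeriv_add, Pi.add_apply]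
  ring

theorem bregmanDist_const_smul (c : ℝ) (F : E → ℝ) (w u : E) :
    bregmanDist (c • F) w u = c * bregmanDist F w u := by
  have lineDeriv_const_smul : lineDeriv ℝ (c • F) u w = c * lineDeriv ℝ F u w :=
    deriv_const_mul_field c
  simp only [bregmanDist, lineDeriv_const_smul, Pi.smul_apply, smul_eq_mul]
  ring

theorem bregmanDist_eq_sub_of_isLocalMin [TopologicalSpace E] [ContinuousAdd E]
    [ContinuousSMul ℝ E] (hmin : IsLocalMin F u) (w : E) :
    bregmanDist F w u = F (u + w) - F u := by
  simp only [bregmanDist, hmin.lineDeriv_eq_zero, Pi.zero_apply, sub_zero]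

end BregmanDist

namespace HasGateauxDerivAt

variable {V : Type*} [NormedAddCommGroup V] [NormedSpace ℝ V] {F : V → ℝ} {f : V →L[ℝ] ℝ} {v : V}

theorem hasLineDerivAt (h : HasGateauxDerivAt F f v) (w : V) : HasLineDerivAt ℝ F (f w) v w := by
  rw [hasLineDerivAt_iff_tendsto_slope_zero]
  simpa only [smul_eq_mul, div_eq_inv_mul] using h w

theorem bregmanDist_eq (h : HasGateauxDerivAt F f v) (w : V) :
    bregmanDist F w v = F (v + w) - F v - f w := by
  rw [bregmanDist, (h.hasLineDerivAt w).lineDeriv]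

end HasGateauxDerivAt

theorem stmt_15_general {E : Type*} [AddCommGroup E] [Module ℝ E] [TopologicalSpace E]
    [ContinuousAdd E] [ContinuousSMul ℝ E] {F₀ F₁ : E → ℝ} {u w : E}
    (hF₀ : LineDifferentiableAt ℝ F₀ u w) (hF₁ : LineDifferentiableAt ℝ F₁ u w)
    {ε p q μ₀ μ₁ a b : ℝ} (hε₀ : 0 ≤ ε) (hε₁ : ε ≤ 1) (hq : 0 < q) (hpq : q ≤ p)
    (hmin : IsLocalMin (F₀ + ε • F₁) u) (hμ₀ : 0 ≤ μ₀) (hμ₁ : 0 ≤ μ₁) (ha : 0 ≤ a) (hb : 0 ≤ b)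
    (h₀ : μ₀ / p * a ^ p ≤ bregmanDist F₀ w u) (h₁ : μ₁ / p * b ^ p ≤ bregmanDist F₁ w u) :
    min μ₀ μ₁ / (p * 2 ^ (p / q - 1)) * (a ^ q + ε * b ^ q) ^ (p / q)
      ≤ (F₀ + ε • F₁) (u + w) - (F₀ + ε • F₁) u := by
  have hεF₁ : LineDifferentiableAt ℝ (ε • F₁) u w := DifferentiableAt.const_smul hF₁ ε
  rw [← bregmanDist_eq_sub_of_isLocalMin hmin, bregmanDist_add hF₀ hεF₁, bregmanDist_const_smul]
  exact min_div_mul_rpow_add_mul_rpow_rpow_div_le ha hb hε₀ hε₁ hq hpq hμ₀ hμ₁ h₀ h₁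

/-- ε-independent sharpness of the nearly semicoercive energy
`F = F₀ + ε·F₁` around its minimizer (Theorem 5.7). Here `s` is the seminorm. -/
theorem stmt_15 {V : Type*} [NormedAddCommGroup V] [NormedSpace ℝ V]
    (s : Seminorm ℝ V) (hscont : Continuous (s : V → ℝ))
    (F₀ F₁ : V → ℝ)
    (hconv₀ : ConvexOn ℝ Set.univ F₀) (hconv₁ : ConvexOn ℝ Set.univ F₁)
    (F₀' F₁' : V → V →L[ℝ] ℝ)
    (hF₀' : ∀ v : V, HasGateauxDerivAt F₀ (F₀' v) v)
    (hF₁' : ∀ v : V, HasGateauxDerivAt F₁ (F₁' v) v)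
    (ε : ℝ) (hε0 : 0 < ε) (hε1 : ε < 1)
    (p q : ℝ) (hq : 1 < q) (hpq : q ≤ p)
    (u : V) (hmin : ∀ v : V, F₀ u + ε * F₁ u ≤ F₀ v + ε * F₁ v)
    (μ₀ μ₁ : ℝ) (hμ₀ : 0 < μ₀) (hμ₁ : 0 < μ₁)
    (W : Set V)
    (h₀ : ∀ w ∈ W, (μ₀ / p) * (s w) ^ p ≤ F₀ (u + w) - F₀ u - F₀' u w)
    (h₁ : ∀ w ∈ W, (μ₁ / p) * ‖w‖ ^ p ≤ F₁ (u + w) - F₁ u - F₁' u w) :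
    ∀ w ∈ W,
      (min μ₀ μ₁ / (p * (2 : ℝ) ^ (p / q - 1))) *
          ((s w) ^ q + ε * ‖w‖ ^ q) ^ (p / q)
        ≤ (F₀ (u + w) + ε * F₁ (u + w)) - (F₀ u + ε * F₁ u) := by
  intro w hw
  have hline₀ := ((hF₀' u).hasLineDerivAt w).lineDifferentiableAt
  have hline₁ := ((hF₁' u).hasLineDerivAt w).lineDifferentiableAt
  have hbreg₀ := (h₀ w hw).trans_eq ((hF₀' u).bregmanDist_eq w).symm
  have hbreg₁ := (h₁ w hw).trans_eq ((hF₁' u).bregmanDist_eq w).symm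
  exact stmt_15_general hline₀ hline₁ hε0.le hε1.le (zero_lt_one.trans hq) hpq (.of_forall hmin)
    hμ₀.le hμ₁.le (apply_nonneg s w) (norm_nonneg w) hbreg₀ hbreg₁
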